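/- If M and M' are equivalent linear tree-to-word transducers that are both in partial normal form, then M and M' are same-ordered. -/

import Mathlib

namespace LTWpaper

/-- Trees over a ranked alphabet: a symbol of arity `n` with `n` children. -/
inductive RTree (F : Type) (ar : F → ℕ) : Type
  | node (f : F) (ts : Fin (ar f) → RTree F ar) : RTree F ar

/-- A rule right-hand side `u₀ q₁(x_{σ(1)}) u₁ … q_n(x_{σ(n)}) u_n`:
`word i` is `u_i` (for `i : Fin (n+1)`), `st i` is `q_{i+1}` (for `i : Fin n`),
and position `i` reads the subtree `x_{perm i}`. -/
structure LTWRule (Δ Q : Type) (n : ℕ) where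
  word : Fin (n + 1) → List Δ
  st : Fin n → Q
  perm : Equiv.Perm (Fin n)

/-- A (deterministic) linear tree-to-word transducer with axiom `pre init(x) post`. -/
structure LTW (F : Type) (ar : F → ℕ) (Δ Q : Type) where
  pre : List Δ
  init : Q
  post : List Δ
  rules : Q → (f : F) → Option (LTWRule Δ Q (ar f))

/-- `u 0 ++ ws 0 ++ u 1 ++ ws 1 ++ ⋯ ++ ws (n-1) ++ u n`. -/
def interleave {Δ : Type} (n : ℕ) (u : Fin (n + 1) → List Δ) (ws : Fin n → List Δ) :
    List Δ :=
  u 0 ++ (List.finRange n).foldr (fun i acc => ws i ++ u i.succ ++ acc) []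

/-- The partial function `⟦M⟧_q` computed by state `q`. -/
def LTW.semState {F Δ Q : Type} {ar : F → ℕ} (M : LTW F ar Δ Q) :
    RTree F ar → Q → Option (List Δ)
  | .node f ts, q =>
    match M.rules q f with
    | none => none
    | some r =>
      if h : ∀ i : Fin (ar f), (M.semState (ts (r.perm i)) (r.st i)).isSome then
        some (interleave (ar f) r.word fun i => (M.semState (ts (r.perm i)) (r.st i)).get (h i))
      else none

/-- The partial function `⟦M⟧` computed by the transducer. -/
def LTW.sem {F Δ Q : Type} {ar : F → ℕ} (M : LTW F ar Δ Q) (t : RTree F ar) :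
    Option (List Δ) :=
  (M.semState t M.init).map fun w => M.pre ++ w ++ M.post

/-- The output language `L_q` of a state. -/
def LTW.lang {F Δ Q : Type} {ar : F → ℕ} (M : LTW F ar Δ Q) (q : Q) : Set (List Δ) :=
  {w | ∃ t, M.semState t q = some w}

/-- Standing assumption: every state has nonempty domain. -/
def LTW.NonemptyDoms {F Δ Q : Type} {ar : F → ℕ} (M : LTW F ar Δ Q) : Prop :=
  ∀ q : Q, ∃ t w, M.semState t q = some w

/-- `w^n`, the `n`-fold concatenation of the word `w`. -/
def listPow {Δ : Type} (w : List Δ) : ℕ → List Δ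
  | 0 => []
  | n + 1 => w ++ listPow w n

/-- `lcp L = ε`: the only common prefix of all words of `L` is the empty word. -/
def LcpEps {Δ : Type} (L : Set (List Δ)) : Prop :=
  ∀ w : List Δ, (∀ v ∈ L, w <+: v) → w = []

/-- `lcs L = ε`: the only common suffix of all words of `L` is the empty word. -/
def LcsEps {Δ : Type} (L : Set (List Δ)) : Prop :=
  ∀ w : List Δ, (∀ v ∈ L, w <:+ v) → w = []

/-- A language is earliest if `lcp L = lcs L = ε`. -/
def EarliestLang {Δ : Type} (L : Set (List Δ)) : Prop := LcpEps L ∧ LcsEps L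

/-- `L ⊆ w*`. -/
def SubPow {Δ : Type} (w : List Δ) (L : Set (List Δ)) : Prop :=
  ∀ v ∈ L, ∃ n : ℕ, v = listPow w n

/-- `L` is periodic of period `w`: `w` is a smallest word with `L ⊆ w*`. -/
def PeriodicOf {Δ : Type} (L : Set (List Δ)) (w : List Δ) : Prop :=
  SubPow w L ∧ ∀ w' : List Δ, SubPow w' L → w.length ≤ w'.length

/-- `L` is periodic. -/
def Periodic {Δ : Type} (L : Set (List Δ)) : Prop := ∃ w, PeriodicOf L w

/-- `L` is quasi-periodic on the left of handle `u` and period `w`: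
`w` is a smallest word with `L ⊆ u w*`. -/
def QPLeftOf {Δ : Type} (L : Set (List Δ)) (u w : List Δ) : Prop :=
  (∀ v ∈ L, ∃ n : ℕ, v = u ++ listPow w n) ∧
  ∀ w' : List Δ, (∀ v ∈ L, ∃ n : ℕ, v = u ++ listPow w' n) → w.length ≤ w'.length

/-- `L` is quasi-periodic on the right of handle `u` and period `w`:
`w` is a smallest word with `L ⊆ w* u`. -/
def QPRightOf {Δ : Type} (L : Set (List Δ)) (u w : List Δ) : Prop :=
  (∀ v ∈ L, ∃ n : ℕ, v = listPow w n ++ u) ∧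
  ∀ w' : List Δ, (∀ v ∈ L, ∃ n : ℕ, v = listPow w' n ++ u) → w.length ≤ w'.length

/-- `L` is quasi-periodic (on the left or on the right). -/
def QuasiPeriodic {Δ : Type} (L : Set (List Δ)) : Prop :=
  (∃ u w, QPLeftOf L u w) ∨ (∃ u w, QPRightOf L u w)

/-- The language `L u = { v u : v ∈ L }`. -/
def appendLang {Δ : Type} (L : Set (List Δ)) (u : List Δ) : Set (List Δ) :=
  {v | ∃ x ∈ L, v = x ++ u}

/-- The language `L₁ u L₂ = { a u b : a ∈ L₁, b ∈ L₂ }`. -/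
def pairLang {Δ : Type} (L₁ : Set (List Δ)) (u : List Δ) (L₂ : Set (List Δ)) :
    Set (List Δ) :=
  {v | ∃ a ∈ L₁, ∃ b ∈ L₂, v = a ++ u ++ b}

/-- An LTW is earliest: every state `q` satisfies `lcp L_q = lcs L_q = ε`, and in every rule
every part `qᵢ(x) uᵢ` satisfies `lcp (L_{qᵢ} uᵢ) = ε`. -/
def LTW.Earliest {F Δ Q : Type} {ar : F → ℕ} (M : LTW F ar Δ Q) : Prop :=
  (∀ q : Q, EarliestLang (M.lang q)) ∧
  ∀ (q : Q) (f : F) (r : LTWRule Δ Q (ar f)), M.rules q f = some r →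
    ∀ i : Fin (ar f), LcpEps (appendLang (M.lang (r.st i)) (r.word i.succ))

/-- An erasing state: `L_q = {ε}`. -/
def LTW.Erasing {F Δ Q : Type} {ar : F → ℕ} (M : LTW F ar Δ Q) (q : Q) : Prop :=
  M.lang q = {([] : List Δ)}

/-- Erase-ordered: in every rule, if `qᵢ` is erasing then every later `q_j` is erasing,
`σ(i) ≤ σ(j)` and `u_j = ε`. -/
def LTW.EraseOrdered {F Δ Q : Type} {ar : F → ℕ} (M : LTW F ar Δ Q) : Prop :=
  ∀ (q : Q) (f : F) (r : LTWRule Δ Q (ar f)), M.rules q f = some r →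
    ∀ i j : Fin (ar f), M.Erasing (r.st i) → i ≤ j →
      M.Erasing (r.st j) ∧ r.perm i ≤ r.perm j ∧ r.word j.succ = []

/-- Co-reachable pairs of states of two transducers over the same input alphabet. -/
inductive CoReach {F Δ Q₁ Q₂ : Type} {ar : F → ℕ}
    (M₁ : LTW F ar Δ Q₁) (M₂ : LTW F ar Δ Q₂) : Q₁ → Q₂ → Prop
  | base : CoReach M₁ M₂ M₁.init M₂.init
  | step {q₁ : Q₁} {q₂ : Q₂} {f : F} {r₁ : LTWRule Δ Q₁ (ar f)} {r₂ : LTWRule Δ Q₂ (ar f)}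
      {i j : Fin (ar f)} :
      CoReach M₁ M₂ q₁ q₂ → M₁.rules q₁ f = some r₁ → M₂.rules q₂ f = some r₂ →
      r₁.perm i = r₂.perm j → CoReach M₁ M₂ (r₁.st i) (r₂.st j)

/-- Two LTWs are same-ordered: co-reachable states either both lack a rule for `f`,
or have rules for `f` with the same permutation. -/
def SameOrdered {F Δ Q₁ Q₂ : Type} {ar : F → ℕ}
    (M₁ : LTW F ar Δ Q₁) (M₂ : LTW F ar Δ Q₂) : Prop :=
  ∀ q₁ q₂, CoReach M₁ M₂ q₁ q₂ → ∀ f : F,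
    (M₁.rules q₁ f = none ∧ M₂.rules q₂ f = none) ∨
    ∃ (r₁ : LTWRule Δ Q₁ (ar f)) (r₂ : LTWRule Δ Q₂ (ar f)),
      M₁.rules q₁ f = some r₁ ∧ M₂.rules q₂ f = some r₂ ∧ r₁.perm = r₂.perm

/-- `Accessible q p`: state `p` is accessible from state `q`. -/
inductive LTW.Accessible {F Δ Q : Type} {ar : F → ℕ} (M : LTW F ar Δ Q) : Q → Q → Prop
  | refl (q : Q) : M.Accessible q q
  | step {q p : Q} {f : F} {r : LTWRule Δ Q (ar f)} (i : Fin (ar f)) :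
      M.Accessible q p → M.rules p f = some r → M.Accessible q (r.st i)

/-- Partial normal form. -/
def LTW.PartialNormalForm {F Δ Q : Type} {ar : F → ℕ} (M : LTW F ar Δ Q) : Prop :=
  (∀ q : Q, QuasiPeriodic (M.lang q) → EarliestLang (M.lang q)) ∧
  M.EraseOrdered ∧
  ∀ (q : Q) (f : F) (r : LTWRule Δ Q (ar f)), M.rules q f = some r →
    ∀ (i : ℕ) (hi : i + 1 < ar f),
      QuasiPeriodic (pairLang (M.lang (r.st ⟨i, Nat.lt_of_succ_lt hi⟩))
          (r.word (Fin.succ ⟨i, Nat.lt_of_succ_lt hi⟩)) (M.lang (r.st ⟨i + 1, hi⟩))) →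
      EarliestLang (pairLang (M.lang (r.st ⟨i, Nat.lt_of_succ_lt hi⟩))
          (r.word (Fin.succ ⟨i, Nat.lt_of_succ_lt hi⟩)) (M.lang (r.st ⟨i + 1, hi⟩))) ∧
      r.perm ⟨i, Nat.lt_of_succ_lt hi⟩ < r.perm ⟨i + 1, hi⟩

/-! States of equivalent transducers that are reached together compute functions that agree up to
fixed words on both sides. Suppose that their rules for some symbol read two subtrees `x`, `y` in
opposite orders. Fixing all the other subtrees gives an equation `A f(x) V g(y) B = g'(y) f'(x)`,
where `f` and `g` are the functions computed on `x` and `y` and the other fixed words are absorbed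
into `f'` and `g'`. Erase-ordering excludes that `f` or `g` is constant, so the equation makes the
values of `f` and `g` quasi-periodic, with periods conjugate by `V`, and normal form makes the
handles empty.

By induction on the distance between the positions of `x` and `y`, the words between them are empty
and the states from one position to the other have a common period. Any two adjacent states in this
range are then quasi-periodic together, so by the third condition of normal form the rule reads `x`
and `y` in increasing order of their indices. The same holds for the rule of the other transducer,
which reads them in the opposite order: a contradiction.
-/

section Words

variable {Δ : Type} {u r s t z : List Δ}

theorem listPow_add (r : List Δ) (m n : ℕ) : listPow r (m + n) = listPow r m ++ listPow r n := by
  induction m with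
  | zero => simp [listPow]
  | succ m ih => simp [Nat.succ_add, listPow, ih]

theorem listPow_append_comm (r : List Δ) (m n : ℕ) :
    listPow r m ++ listPow r n = listPow r n ++ listPow r m := by
  rw [← listPow_add, ← listPow_add, Nat.add_comm]

theorem le_length_listPow (hr : r ≠ []) (n : ℕ) : n ≤ (listPow r n).length := by
  have := List.length_pos_iff.2 hr
  induction n with
  | zero => exact Nat.zero_le _
  | succ n ih => simp only [listPow, List.length_append]; omega

theorem ne_nil_of_append_eq (hr : r ≠ []) (h : r ++ u = u ++ s) : s ≠ [] := by
  rintro rfl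
  exact hr (by simpa using h)

theorem listPow_append_of_append_eq (h : z ++ u = u ++ r) (n : ℕ) :
    listPow z n ++ u = u ++ listPow r n := by
  induction n with
  | zero => simp [listPow]
  | succ n ih => simp only [listPow]; rw [List.append_assoc, ih, ← List.append_assoc, h,
      List.append_assoc]

theorem prefix_listPow_of_prefix_append (hz : z ≠ []) (hu : u <+: z ++ u) {n : ℕ}
    (hn : u.length ≤ n) : u <+: listPow z n := by
  obtain ⟨r, hr⟩ := hu
  have hpow : u <+: listPow z n ++ u := ⟨_, (listPow_append_of_append_eq hr.symm n).symm⟩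
  exact List.prefix_of_prefix_length_le hpow (List.prefix_append _ _)
    (hn.trans (le_length_listPow hz n))

/-- Both words are prefixes of the infinite word `ttt…`. -/
theorem prefix_or_prefix_of_prefix_append (ht : t ≠ []) (hs : s <+: t ++ s) (hu : u <+: t ++ u) :
    s <+: u ∨ u <+: s :=
  List.prefix_or_prefix_of_prefix
    (prefix_listPow_of_prefix_append ht hs (le_max_left _ _))
    (prefix_listPow_of_prefix_append ht hu (le_max_right _ _))

theorem exists_forall_length_le {P : List Δ → Prop} (h : ∃ w, P w) :
    ∃ w, P w ∧ ∀ w', P w' → w.length ≤ w'.length := by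
  obtain ⟨w, hw⟩ := exists_minimalFor_of_wellFoundedLT P List.length h
  exact ⟨w, hw.1, fun w' hw' => (le_total _ _).elim id (hw.2 hw')⟩

/-- The centralizer of `r` is generated by its shortest nonempty element. -/
theorem exists_subPow_centralizer (hr : r ≠ []) : ∃ p, SubPow p {s | s ++ r = r ++ s} := by
  obtain ⟨p, ⟨hp, hpr⟩, hmin⟩ :=
    exists_forall_length_le (P := fun p => p ≠ [] ∧ p ++ r = r ++ p) ⟨r, hr, rfl⟩
  refine ⟨p, fun s hs => ?_⟩
  induction hn : s.length using Nat.strong_induction_on generalizing s with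
  | _ n ih =>
    by_cases hs0 : s = []
    · exact ⟨0, hs0⟩
    have hle : p.length ≤ s.length := hmin s ⟨hs0, hs⟩
    obtain ⟨s', rfl⟩ : p <+: s := List.prefix_of_prefix_length_le
      (prefix_listPow_of_prefix_append hr ⟨r, hpr⟩ hle)
      (prefix_listPow_of_prefix_append hr ⟨r, hs⟩ le_rfl) hle
    have hs' : s' ++ r = r ++ s' := by
      apply List.append_cancel_left (as := p)
      rw [← List.append_assoc, Set.mem_ofPred.1 hs, ← List.append_assoc, ← hpr, List.append_assoc]
    have := List.length_pos_iff.2 hp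
    obtain ⟨m, rfl⟩ := ih s'.length (by simp at hn; omega) s' hs' rfl
    exact ⟨m + 1, rfl⟩

theorem append_comm_trans (hr : r ≠ []) (hs : s ++ r = r ++ s) (ht : t ++ r = r ++ t) :
    s ++ t = t ++ s := by
  obtain ⟨p, hp⟩ := exists_subPow_centralizer hr
  obtain ⟨m, rfl⟩ := hp s hs
  obtain ⟨n, rfl⟩ := hp t ht
  exact listPow_append_comm p m n

/-- Both `u` and `z ++ u` are prefixes of `z ++ rⁿ` for large `n`. -/
theorem exists_append_eq_append_of_comm (hr : r ≠ []) (hz : z ++ r = r ++ z)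
    (hu : r ++ u = u ++ s) : ∃ t, z ++ u = u ++ t ∧ t ++ s = s ++ t := by
  have hupow : u <+: listPow r u.length := prefix_listPow_of_prefix_append hr ⟨s, hu.symm⟩ le_rfl
  have huz : u <+: z ++ listPow r u.length := by
    rw [← listPow_append_of_append_eq hz.symm]
    exact hupow.trans (List.prefix_append _ _)
  obtain ⟨t, ht⟩ : u <+: z ++ u := List.prefix_of_prefix_length_le huz
    ((List.prefix_append_right_inj z).2 hupow) (by simp)
  refine ⟨t, ht.symm, List.append_cancel_left (as := u) ?_⟩
  calc u ++ (t ++ s) = z ++ u ++ s := by rw [← List.append_assoc, ht]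
    _ = z ++ r ++ u := by rw [List.append_assoc, ← hu, List.append_assoc]
    _ = r ++ (z ++ u) := by rw [hz, List.append_assoc]
    _ = u ++ (s ++ t) := by rw [← ht, ← List.append_assoc, hu, List.append_assoc]

section Equation

variable {X Y : Type*} {f a : X → List Δ} {g b : Y → List Δ} {x₁ x₂ : X} {y₁ y₂ : Y}

/-- If `f x₁` and `f x₂` were incomparable, every `b y` would be a prefix of both. Say
`b y₂ = b y₁ ++ t`; then the remainders of `f x₁` and `f x₂` after `b y₂` would be prefixes of the
infinite word `ttt…`, hence comparable. -/
theorem prefix_or_prefix_of_forall_append_eq (h : ∀ x y, f x ++ g y = b y ++ a x)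
    (hg : g y₁ ≠ g y₂) (x₁ x₂ : X) : f x₁ <+: f x₂ ∨ f x₂ <+: f x₁ := by
  by_contra! ⟨h₁₂, h₂₁⟩
  have hb_prefix {x x'} (hx : ¬ f x <+: f x') (hx' : ¬ f x' <+: f x) (y) : b y <+: f x := by
    refine (List.prefix_or_prefix_of_prefix (l₃ := f x ++ g y)
      (h x y ▸ List.prefix_append _ _) (List.prefix_append _ _)).resolve_right fun hfb => ?_
    have hfx : f x <+: f x' ++ g y := hfb.trans (h x' y ▸ List.prefix_append _ _)
    exact (List.prefix_or_prefix_of_prefix hfx (List.prefix_append _ _)).elim hx hx'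
  wlog hb : b y₁ <+: b y₂ generalizing y₁ y₂
  · exact this hg.symm ((List.prefix_or_prefix_of_prefix (hb_prefix h₁₂ h₂₁ y₁)
      (hb_prefix h₁₂ h₂₁ y₂)).resolve_left hb)
  obtain ⟨t, ht⟩ := hb
  have ht0 : t ≠ [] := by
    rintro rfl
    apply hg
    apply List.append_cancel_left (as := f x₁)
    rw [h, h, ← ht, List.append_nil]
  have hsplit {x} (hx : b y₂ <+: f x) : ∃ k, b y₂ ++ k = f x ∧ k <+: t ++ k := by
    obtain ⟨k, hk⟩ := hx
    have hy₁ := h x y₁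
    have hy₂ := h x y₂
    rw [← hk, ← ht] at hy₁ hy₂
    simp only [List.append_assoc, List.append_cancel_left_eq] at hy₁ hy₂
    refine ⟨k, hk, List.prefix_of_prefix_length_le (l₃ := k ++ g y₂) (List.prefix_append _ _)
      ⟨g y₁, ?_⟩ (by simp)⟩
    rw [List.append_assoc, hy₁, hy₂]
  obtain ⟨k₁, hk₁, hk₁t⟩ := hsplit (hb_prefix h₁₂ h₂₁ y₂)
  obtain ⟨k₂, hk₂, hk₂t⟩ := hsplit (hb_prefix h₂₁ h₁₂ y₂)
  rw [← hk₁, ← hk₂, List.prefix_append_right_inj] at h₁₂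
  rw [← hk₁, ← hk₂, List.prefix_append_right_inj] at h₂₁
  exact (prefix_or_prefix_of_prefix_append ht0 hk₁t hk₂t).elim h₁₂ h₂₁

theorem exists_forall_prefix [Nonempty X] (h : ∀ x₁ x₂, f x₁ <+: f x₂ ∨ f x₂ <+: f x₁) :
    ∃ x₀, ∀ x, f x₀ <+: f x := by
  refine ⟨Function.argmin fun x => (f x).length, fun x => ?_⟩
  refine (h _ x).elim id fun hle => ?_
  rw [hle.eq_of_length_le (Function.argmin_le (fun x => (f x).length) x)]

theorem exists_forall_eq_append [Nonempty X] (h : ∀ x y, f x ++ g y = b y ++ a x)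
    (hg : (Set.range g).Nontrivial) : ∃ x₀, ∃ s : X → List Δ, ∀ x, f x = f x₀ ++ s x := by
  obtain ⟨_, ⟨y₁, rfl⟩, _, ⟨y₂, rfl⟩, hy⟩ := hg
  obtain ⟨x₀, hx₀⟩ := exists_forall_prefix (prefix_or_prefix_of_forall_append_eq h hy)
  choose s hs using hx₀
  exact ⟨x₀, s, fun x => (hs x).symm⟩

theorem exists_forall_eq_append' [Nonempty Y] (h : ∀ x y, f x ++ g y = b y ++ a x)
    (hf : (Set.range f).Nontrivial) : ∃ y₀, ∃ r : Y → List Δ, ∀ y, g y = r y ++ g y₀ := by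
  have hrev : ∀ y x, (g y).reverse ++ (f x).reverse = (a x).reverse ++ (b y).reverse := by
    intro y x
    rw [← List.reverse_append, h, List.reverse_append]
  obtain ⟨y₀, r, hr⟩ := exists_forall_eq_append hrev <| by
    rw [Set.range_comp' List.reverse f]
    exact hf.image List.reverse_injective
  refine ⟨y₀, fun y => (r y).reverse, fun y => List.reverse_injective ?_⟩
  rw [hr y, List.reverse_append, List.reverse_reverse]

theorem append_comm_of_append_eq {f₀ g₀ a₀ a₁ b₀ b₁ s r : List Δ} (h₀₀ : f₀ ++ g₀ = b₀ ++ a₀)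
    (h₁₀ : f₀ ++ s ++ g₀ = b₀ ++ a₁) (h₀₁ : f₀ ++ (r ++ g₀) = b₁ ++ a₀)
    (h₁₁ : f₀ ++ s ++ (r ++ g₀) = b₁ ++ a₁) : s ++ r = r ++ s := by
  suffices hcomm : f₀ ++ (s ++ r) ++ g₀ = f₀ ++ (r ++ s) ++ g₀ from
    List.append_cancel_left (List.append_cancel_right hcomm)
  rcases List.append_eq_append_iff.1 h₀₀ with ⟨c, rfl, rfl⟩ | ⟨c, rfl, rfl⟩
  · have ha₁ : s ++ c ++ a₀ = c ++ a₁ := by simpa using h₁₀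
    have hb₁ : f₀ ++ r ++ c = b₁ := by simpa [← List.append_assoc] using h₀₁
    calc f₀ ++ (s ++ r) ++ (c ++ a₀) = b₁ ++ a₁ := by rw [← h₁₁]; simp only [List.append_assoc]
      _ = f₀ ++ r ++ (c ++ a₁) := by rw [← hb₁, List.append_assoc]
      _ = f₀ ++ (r ++ s) ++ (c ++ a₀) := by rw [← ha₁]; simp only [List.append_assoc]
  · have ha₁ : c ++ s ++ g₀ = a₁ := by simpa using h₁₀
    have hb₁ : b₀ ++ c ++ r = b₁ ++ c := by simpa [← List.append_assoc] using h₀₁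
    calc b₀ ++ c ++ (s ++ r) ++ g₀ = b₁ ++ a₁ := by rw [← h₁₁]; simp only [List.append_assoc]
      _ = b₁ ++ c ++ (s ++ g₀) := by rw [← ha₁]; simp only [List.append_assoc]
      _ = b₀ ++ c ++ (r ++ s) ++ g₀ := by rw [← hb₁]; simp only [List.append_assoc]

theorem exists_comm_of_forall_append_eq (h : ∀ x y, f x ++ g y = b y ++ a x)
    (hf : (Set.range f).Nontrivial) (hg : (Set.range g).Nontrivial) :
    ∃ x₀ y₀, ∃ s : X → List Δ, ∃ r : Y → List Δ, (∀ x, f x = f x₀ ++ s x) ∧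
      (∀ y, g y = r y ++ g y₀) ∧ ∀ x y, s x ++ r y = r y ++ s x := by
  have := Set.range_nonempty_iff_nonempty.1 hf.nonempty
  have := Set.range_nonempty_iff_nonempty.1 hg.nonempty
  obtain ⟨x₀, s, hs⟩ := exists_forall_eq_append h hg
  obtain ⟨y₀, r, hr⟩ := exists_forall_eq_append' h hf
  refine ⟨x₀, y₀, s, r, hs, hr, fun x y => ?_⟩
  apply append_comm_of_append_eq (h x₀ y₀) (a₁ := a x) (b₁ := b y)
  · rw [← hs, h]
  · rw [← hr, h]
  · rw [← hs, ← hr, h]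

theorem exists_conj_of_forall_append_eq {A B : List Δ}
    (h : ∀ x y, A ++ f x ++ u ++ g y ++ B = b y ++ a x)
    (hf : (Set.range f).Nontrivial) (hg : (Set.range g).Nontrivial) :
    ∃ x₀ y₀ r s, r ≠ [] ∧ r ++ u = u ++ s ∧ (∀ x, ∃ t, f x = f x₀ ++ t ∧ t ++ r = r ++ t) ∧
      ∀ y, ∃ t, g y = t ++ g y₀ ∧ t ++ s = s ++ t := by
  obtain ⟨x₀, y₀, p, q, hp, hq, hpq⟩ := exists_comm_of_forall_append_eq
    (f := fun x => A ++ f x) (g := fun y => u ++ g y ++ B)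
    (fun x y => by simpa using h x y)
    (by rw [Set.range_comp' (A ++ ·) f]; exact hf.image (List.append_right_injective A))
    (by rw [Set.range_comp' (fun w => u ++ w ++ B) g]
        exact hg.image ((List.append_left_injective B).comp (List.append_right_injective u)))
  simp only [List.append_assoc, List.append_cancel_left_eq] at hp
  simp only [← List.append_assoc, List.append_cancel_right_eq] at hq
  have hq' (y) : ∃ t, g y = t ++ g y₀ ∧ q y ++ u = u ++ t := by
    have hlen : (g y₀).length ≤ (g y).length := by
      have := congrArg List.length (hq y)
      simp only [List.length_append] at this
      omega
    obtain ⟨t, ht⟩ := List.suffix_of_suffix_length_le (l₃ := u ++ g y)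
      (hq y ▸ List.suffix_append _ _) (List.suffix_append _ _) hlen
    refine ⟨t, ht.symm, List.append_cancel_right (bs := g y₀) ?_⟩
    rw [← hq, List.append_assoc, ht]
  choose q' hgq' hqq' using hq'
  obtain ⟨_, ⟨x₁, rfl⟩, hx₁⟩ := hf.exists_ne (f x₀)
  obtain ⟨_, ⟨y₁, rfl⟩, hy₁⟩ := hg.exists_ne (g y₀)
  have hpx₁ : p x₁ ≠ [] := fun h0 => hx₁ (by rw [hp, h0, List.append_nil])
  have hqy₁ : q y₁ ≠ [] := fun h0 =>
    hy₁ (List.append_cancel_left (as := u) (by rw [hq, h0, List.nil_append]))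
  refine ⟨x₀, y₀, q y₁, q' y₁, hqy₁, hqq' y₁, fun x => ⟨p x, hp x, hpq x y₁⟩,
    fun y => ⟨q' y, hgq' y, ?_⟩⟩
  obtain ⟨t, ht, htq⟩ := exists_append_eq_append_of_comm hqy₁
    (append_comm_trans hpx₁ (hpq x₁ y).symm (hpq x₁ y₁).symm) (hqq' y₁)
  rwa [List.append_cancel_left ((hqq' y).symm.trans ht)]

end Equation

end Words

section Languages

variable {Δ : Type} {L L₁ L₂ : Set (List Δ)} {c u : List Δ}

theorem quasiPeriodic_of_forall_eq_append_comm (hc : c ≠ [])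
    (h : ∀ v ∈ L, ∃ t, v = u ++ t ∧ t ++ c = c ++ t) : QuasiPeriodic L := by
  obtain ⟨p, hp⟩ := exists_subPow_centralizer hc
  refine Or.inl ⟨u, exists_forall_length_le ⟨p, fun v hv => ?_⟩⟩
  obtain ⟨t, rfl, ht⟩ := h v hv
  exact (hp t ht).imp fun _ => congrArg (u ++ ·)

theorem quasiPeriodic_of_forall_eq_comm_append (hc : c ≠ [])
    (h : ∀ v ∈ L, ∃ t, v = t ++ u ∧ t ++ c = c ++ t) : QuasiPeriodic L := by
  obtain ⟨p, hp⟩ := exists_subPow_centralizer hc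
  refine Or.inr ⟨u, exists_forall_length_le ⟨p, fun v hv => ?_⟩⟩
  obtain ⟨t, rfl, ht⟩ := h v hv
  exact (hp t ht).imp fun _ => congrArg (· ++ u)

theorem quasiPeriodic_singleton (w : List Δ) : QuasiPeriodic {w} :=
  Or.inl ⟨w, exists_forall_length_le ⟨[], fun _ hv => ⟨0, by simpa [listPow] using hv⟩⟩⟩

theorem eq_singleton_nil_of_subsingleton (hL : QuasiPeriodic L → EarliestLang L)
    (hne : L.Nonempty) (hsub : L.Subsingleton) : L = {[]} := by
  obtain ⟨w, rfl⟩ := hsub.eq_empty_or_singleton.resolve_left hne.ne_empty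
  rw [(hL (quasiPeriodic_singleton w)).1 w fun v hv => Set.mem_singleton_iff.1 hv ▸ List.prefix_rfl]

/-- The languages `L₁` and `L₂` contain the empty word and are periodic, with periods that are
conjugate by `u`. Rather than the periods themselves, the structure asks for conjugate nonempty
words that commute with `L₁` and with `L₂`. -/
structure ConjugatePeriodic (L₁ : Set (List Δ)) (u : List Δ) (L₂ : Set (List Δ)) : Prop where
  nil_mem_left : [] ∈ L₁
  nil_mem_right : [] ∈ L₂
  exists_conj : ∃ r s, r ≠ [] ∧ r ++ u = u ++ s ∧ (∀ x ∈ L₁, x ++ r = r ++ x) ∧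
    ∀ y ∈ L₂, y ++ s = s ++ y

namespace ConjugatePeriodic

theorem exists_forall_mem_pairLang (h : ConjugatePeriodic L₁ u L₂) :
    ∃ s ≠ [], ∀ v ∈ pairLang L₁ u L₂, ∃ t, v = u ++ t ∧ t ++ s = s ++ t := by
  obtain ⟨r, s, hr, hrs, h₁, h₂⟩ := h.exists_conj
  refine ⟨s, ne_nil_of_append_eq hr hrs, ?_⟩
  rintro _ ⟨x, hx, y, hy, rfl⟩
  obtain ⟨t, ht, hts⟩ := exists_append_eq_append_of_comm hr (h₁ x hx) hrs
  refine ⟨t ++ y, by rw [ht, List.append_assoc], ?_⟩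
  rw [List.append_assoc, h₂ y hy, ← List.append_assoc, hts, List.append_assoc]

theorem quasiPeriodic (h : ConjugatePeriodic L₁ u L₂) : QuasiPeriodic (pairLang L₁ u L₂) :=
  let ⟨_, hs, hv⟩ := h.exists_forall_mem_pairLang
  quasiPeriodic_of_forall_eq_append_comm hs hv

theorem eq_nil_of_lcpEps (h : ConjugatePeriodic L₁ u L₂) (hL : LcpEps (pairLang L₁ u L₂)) :
    u = [] :=
  let ⟨_, _, hv⟩ := h.exists_forall_mem_pairLang
  hL u fun v hmem => let ⟨t, ht, _⟩ := hv v hmem; ⟨t, ht.symm⟩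

theorem of_forall_append_eq {X Y : Type*} {f a : X → List Δ} {g b : Y → List Δ} {A B : List Δ}
    (h : ∀ x y, A ++ f x ++ u ++ g y ++ B = b y ++ a x)
    (hf : (Set.range f).Nontrivial) (hg : (Set.range g).Nontrivial)
    (hfe : QuasiPeriodic (Set.range f) → EarliestLang (Set.range f))
    (hge : QuasiPeriodic (Set.range g) → EarliestLang (Set.range g)) :
    ConjugatePeriodic (Set.range f) u (Set.range g) := by
  obtain ⟨x₀, y₀, r, s, hr, hrs, hfr, hgs⟩ := exists_conj_of_forall_append_eq h hf hg
  have hs : s ≠ [] := ne_nil_of_append_eq hr hrs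
  have hfx₀ : f x₀ = [] := by
    refine (hfe (quasiPeriodic_of_forall_eq_append_comm hr (Set.forall_mem_range.2 hfr))).1 _
      (Set.forall_mem_range.2 fun x => ?_)
    obtain ⟨t, ht, -⟩ := hfr x
    exact ⟨t, ht.symm⟩
  have hgy₀ : g y₀ = [] := by
    refine (hge (quasiPeriodic_of_forall_eq_comm_append hs (Set.forall_mem_range.2 hgs))).2 _
      (Set.forall_mem_range.2 fun y => ?_)
    obtain ⟨t, ht, -⟩ := hgs y
    exact ⟨t, ht.symm⟩
  refine ⟨⟨x₀, hfx₀⟩, ⟨y₀, hgy₀⟩, r, s, hr, hrs, Set.forall_mem_range.2 fun x => ?_,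
    Set.forall_mem_range.2 fun y => ?_⟩
  · obtain ⟨t, ht, htr⟩ := hfr x
    rwa [ht, hfx₀]
  · obtain ⟨t, ht, hts⟩ := hgs y
    rwa [ht, hgy₀, List.append_nil]

end ConjugatePeriodic

end Languages

section Interleave

variable {Δ : Type} {n : ℕ}

theorem interleave_eq_flatMap (w : Fin (n + 1) → List Δ) (z : Fin n → List Δ) :
    interleave n w z = w 0 ++ (List.finRange n).flatMap fun i => z i ++ w i.succ := by
  rw [interleave]
  congr 1
  induction List.finRange n with
  | nil => rfl
  | cons i l ih => rw [List.foldr_cons, ih, List.flatMap_cons]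

theorem exists_eq_append_cons_of_pairwise {α : Type*} {R : α → α → Prop} {l : List α} {a : α}
    (ha : a ∈ l) (hl : l.Pairwise R) : ∃ l₁ l₂, l = l₁ ++ a :: l₂ ∧ l₁.Pairwise R ∧
      (∀ b ∈ l₁, R b a) ∧ ∀ b ∈ l₂, R a b := by
  obtain ⟨l₁, l₂, rfl⟩ := List.append_of_mem ha
  obtain ⟨h₁, h₂, h⟩ := List.pairwise_append.1 hl
  exact ⟨l₁, l₂, rfl, h₁, fun b hb => h b hb a List.mem_cons_self,
    fun _ => List.rel_of_pairwise_cons h₂⟩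

theorem flatMap_eq_of_forall_ne {α β : Type*} {l : List α} {a : α} {f : α → List β} (ha : a ∈ l)
    (hl : l.Nodup) (hf : ∀ b ∈ l, b ≠ a → f b = []) : l.flatMap f = f a := by
  obtain ⟨l₁, l₂, rfl, -, h₁, h₂⟩ := exists_eq_append_cons_of_pairwise ha hl
  have hl₁ : l₁.flatMap f = [] :=
    List.flatMap_eq_nil_iff.2 fun b hb => hf b (by simp [hb]) (h₁ b hb)
  have hl₂ : l₂.flatMap f = [] :=
    List.flatMap_eq_nil_iff.2 fun b hb => hf b (by simp [hb]) (h₂ b hb).symm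
  rw [List.flatMap_append, List.flatMap_cons, hl₁, hl₂, List.nil_append, List.append_nil]

theorem exists_finRange_eq_append {i j : Fin n} (hij : i < j) : ∃ l₁ l₂ l₃,
    List.finRange n = l₁ ++ i :: l₂ ++ j :: l₃ ∧ (∀ t ∈ l₁, t < i) ∧
      (∀ t, t ∈ l₂ ↔ t ∈ Set.Ioo i j) ∧ ∀ t ∈ l₃, j < t := by
  obtain ⟨l, l₃, hl, hpw, h, h₃⟩ := exists_eq_append_cons_of_pairwise (List.mem_finRange j)
    (List.sortedLT_finRange n).pairwise
  have hi : i ∈ l := by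
    have := hl ▸ List.mem_finRange i
    grind
  obtain ⟨l₁, l₂, rfl, -, h₁, h₂⟩ := exists_eq_append_cons_of_pairwise hi hpw
  refine ⟨l₁, l₂, l₃, hl, h₁, fun t => ⟨fun ht => ⟨h₂ t ht, h t (by simp [ht])⟩, fun ht => ?_⟩, h₃⟩
  have := hl ▸ List.mem_finRange t
  grind

theorem exists_interleave_update_eq (w : Fin (n + 1) → List Δ) (z : Fin n → List Δ) (i : Fin n) :
    ∃ P S, ∀ u, interleave n w (Function.update z i u) = P ++ u ++ S := by
  obtain ⟨l₁, l₂, hl, -, h₁, h₂⟩ := exists_eq_append_cons_of_pairwise (List.mem_finRange i)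
    (List.nodup_finRange n)
  refine ⟨w 0 ++ l₁.flatMap fun t => z t ++ w t.succ,
    w i.succ ++ l₂.flatMap fun t => z t ++ w t.succ, fun u => ?_⟩
  have hl₁ := List.flatMap_congr (f := fun t => Function.update z i u t ++ w t.succ) fun t ht =>
    congrArg (· ++ w t.succ) (Function.update_of_ne (h₁ t ht) u z)
  have hl₂ := List.flatMap_congr (f := fun t => Function.update z i u t ++ w t.succ) fun t ht =>
    congrArg (· ++ w t.succ) (Function.update_of_ne (h₂ t ht).symm u z)
  rw [interleave_eq_flatMap, hl, List.flatMap_append, List.flatMap_cons, hl₁, hl₂,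
    Function.update_self]
  simp only [List.append_assoc]

theorem exists_interleave_update_update_eq (w : Fin (n + 1) → List Δ) (z : Fin n → List Δ)
    {i j : Fin n} (hij : i < j) : ∃ P V S,
      (∀ u v, interleave n w (Function.update (Function.update z i u) j v) =
        P ++ u ++ V ++ v ++ S) ∧
      ∀ m ∈ Set.Ico i j, (∀ t ∈ Set.Ioo i j, z t = []) →
        (∀ t ∈ Set.Ico i j, t ≠ m → w t.succ = []) → V = w m.succ := by
  obtain ⟨l₁, l₂, l₃, hl, h₁, h₂, h₃⟩ := exists_finRange_eq_append hij
  refine ⟨w 0 ++ l₁.flatMap fun t => z t ++ w t.succ,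
    w i.succ ++ l₂.flatMap fun t => z t ++ w t.succ,
    w j.succ ++ l₃.flatMap fun t => z t ++ w t.succ, fun u v => ?_, fun m hm hz hw => ?_⟩
  · have hcongr {l : List (Fin n)} (hi : i ∉ l) (hj : j ∉ l) :
        (l.flatMap fun t => Function.update (Function.update z i u) j v t ++ w t.succ) =
          l.flatMap fun t => z t ++ w t.succ :=
      List.flatMap_congr fun t ht => by
        rw [Function.update_of_ne (ne_of_mem_of_not_mem ht hj),
          Function.update_of_ne (ne_of_mem_of_not_mem ht hi)]
    rw [interleave_eq_flatMap, hl, List.flatMap_append, List.flatMap_append, List.flatMap_cons,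
      List.flatMap_cons, hcongr (l := l₁), hcongr (l := l₂), hcongr (l := l₃),
      Function.update_self, Function.update_of_ne hij.ne, Function.update_self]
    · simp only [List.append_assoc]
    all_goals grind
  · have hIco : ∀ t, t ∈ i :: l₂ ↔ t ∈ Set.Ico i j := by
      intro t; grind
    have hnodup : (i :: l₂).Nodup := by
      have := List.nodup_finRange n
      grind
    have hl₂ := List.flatMap_congr (l := l₂) (f := fun t => z t ++ w t.succ) fun t ht =>
      congrArg (· ++ w t.succ) (hz t ((h₂ t).1 ht))
    rw [hl₂, ← flatMap_eq_of_forall_ne ((hIco m).2 hm) hnodup fun t ht => hw t ((hIco t).1 ht)]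
    simp

end Interleave

section EqUpToContext

variable {Δ : Type} {X : Type*} {f g : X → List Δ}

/-- The word-valued functions `f` and `g` agree after each of them has been put between two words
that do not depend on the argument. This is how the states of equivalent transducers are related:
they need not compute the same function. -/
def EqUpToContext (f g : X → List Δ) : Prop :=
  ∃ A B A' B', ∀ x, A ++ f x ++ B = A' ++ g x ++ B'

theorem EqUpToContext.symm (h : EqUpToContext f g) : EqUpToContext g f :=
  let ⟨A, B, A', B', h⟩ := h
  ⟨A', B', A, B, fun x => (h x).symm⟩

theorem EqUpToContext.range_eq_singleton_nil [Nonempty X] (h : EqUpToContext f g)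
    (hg : QuasiPeriodic (Set.range g) → EarliestLang (Set.range g))
    (hf : Set.range f = {[]}) : Set.range g = {[]} := by
  obtain ⟨A, B, A', B', h⟩ := h
  have hf' (x) : f x = [] := by simpa [hf] using Set.mem_range_self (f := f) x
  refine eq_singleton_nil_of_subsingleton hg (Set.range_nonempty g) ?_
  rintro _ ⟨x, rfl⟩ _ ⟨y, rfl⟩
  apply List.append_cancel_left (as := A')
  apply List.append_cancel_right (bs := B')
  rw [← h, ← h, hf', hf']

end EqUpToContext

section RuleOutput

variable {Δ : Type} {n : ℕ} {D : Fin n → Type*} {a b : ∀ k, D k → List Δ}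
  {w w' : Fin (n + 1) → List Δ} {σ σ' : Equiv.Perm (Fin n)}

theorem apply_update_perm (a : ∀ k, D k → List Δ) (σ : Equiv.Perm (Fin n)) (x : ∀ k, D k)
    (k : Fin n) (t : D k) :
    (fun i => a (σ i) (Function.update x k t (σ i))) =
      Function.update (fun i => a (σ i) (x (σ i))) (σ.symm k) (a k t) := by
  simp only [Function.apply_update a]
  exact Function.update_comp_equiv (fun k => a k (x k)) σ k (a k t)

/-- The word that a rule with words `w` and permutation `σ` produces on children `x`, when `a k` is
the function applied to the `k`-th child. -/
def ruleOutput (w : Fin (n + 1) → List Δ) (σ : Equiv.Perm (Fin n)) (a : ∀ k, D k → List Δ)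
    (x : ∀ k, D k) : List Δ :=
  interleave n w fun i => a (σ i) (x (σ i))

theorem exists_ruleOutput_update_eq (w : Fin (n + 1) → List Δ) (σ : Equiv.Perm (Fin n))
    (a : ∀ k, D k → List Δ) (x : ∀ k, D k) (k : Fin n) :
    ∃ P S, ∀ t, ruleOutput w σ a (Function.update x k t) = P ++ a k t ++ S := by
  obtain ⟨P, S, h⟩ := exists_interleave_update_eq w (fun i => a (σ i) (x (σ i))) (σ.symm k)
  exact ⟨P, S, fun t => by rw [ruleOutput, apply_update_perm, h]⟩

theorem exists_ruleOutput_update_update_eq (w : Fin (n + 1) → List Δ) (a : ∀ k, D k → List Δ)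
    (x : ∀ k, D k) {k l : Fin n} (hkl : σ.symm k < σ.symm l) : ∃ P V S,
      (∀ s t, ruleOutput w σ a (Function.update (Function.update x k s) l t) =
        P ++ a k s ++ V ++ a l t ++ S) ∧
      ∀ m ∈ Set.Ico (σ.symm k) (σ.symm l),
        (∀ i ∈ Set.Ioo (σ.symm k) (σ.symm l), a (σ i) (x (σ i)) = []) →
        (∀ i ∈ Set.Ico (σ.symm k) (σ.symm l), i ≠ m → w i.succ = []) → V = w m.succ := by
  obtain ⟨P, V, S, h, hV⟩ :=
    exists_interleave_update_update_eq w (fun i => a (σ i) (x (σ i))) hkl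
  exact ⟨P, V, S, fun s t => by rw [ruleOutput, apply_update_perm, apply_update_perm, h], hV⟩

theorem EqUpToContext.of_ruleOutput [∀ k, Nonempty (D k)]
    (h : EqUpToContext (ruleOutput w σ a) (ruleOutput w' σ' b)) (k : Fin n) :
    EqUpToContext (a k) (b k) := by
  obtain ⟨A, B, A', B', h⟩ := h
  obtain ⟨x⟩ : Nonempty (∀ k, D k) := inferInstance
  obtain ⟨P, S, hP⟩ := exists_ruleOutput_update_eq w σ a x k
  obtain ⟨P', S', hP'⟩ := exists_ruleOutput_update_eq w' σ' b x k
  refine ⟨A ++ P, S ++ B, A' ++ P', S' ++ B', fun t => ?_⟩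
  simpa [hP, hP'] using h (Function.update x k t)

/-- The part of the partial normal form that concerns one rule: `L i` is the language of the state
at position `i`, `w` are the words and `σ` is the permutation of the rule. -/
structure NormalRule (L : Fin n → Set (List Δ)) (w : Fin (n + 1) → List Δ)
    (σ : Equiv.Perm (Fin n)) : Prop where
  earliest : ∀ i, QuasiPeriodic (L i) → EarliestLang (L i)
  erasing : ∀ i j, i ≤ j → L i = {[]} → L j = {[]} ∧ σ i ≤ σ j
  adjacent : ∀ i j, i ⋖ j → QuasiPeriodic (pairLang (L i) (w i.succ) (L j)) →
    EarliestLang (pairLang (L i) (w i.succ) (L j)) ∧ σ i < σ j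

/-- The positions from `i` to `j` of a rule behave like a single periodic state: their languages
contain the empty word and commute with a common nonempty word, the words between them are empty,
and the subtrees at `i` and at `j` are in increasing order. -/
structure Fused (L : Fin n → Set (List Δ)) (w : Fin (n + 1) → List Δ) (σ : Equiv.Perm (Fin n))
    (i j : Fin n) : Prop where
  nil_mem : ∀ t ∈ Set.Icc i j, [] ∈ L t
  exists_comm : ∃ p ≠ [], ∀ t ∈ Set.Icc i j, ∀ v ∈ L t, v ++ p = p ++ v
  word_eq_nil : ∀ t ∈ Set.Ico i j, w t.succ = []
  perm_le : σ i ≤ σ j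

variable {L : Fin n → Set (List Δ)} {i j m m' : Fin n}

theorem Fused.append (hN : NormalRule L w σ) (h₁ : Fused L w σ i m) (him : i ≤ m)
    (hm : m ⋖ m') (h₂ : Fused L w σ m' j) (hmj : m' ≤ j)
    (hc : ConjugatePeriodic (L i) (w m.succ) (L j)) (hi : (L i).Nontrivial)
    (hj : (L j).Nontrivial) : Fused L w σ i j := by
  obtain ⟨p₁, hp₁, hcomm₁⟩ := h₁.exists_comm
  obtain ⟨p₂, hp₂, hcomm₂⟩ := h₂.exists_comm
  obtain ⟨r, s, hr, hrs, hir, hjs⟩ := hc.exists_conj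
  have hcommr : ∀ t ∈ Set.Icc i m, ∀ v ∈ L t, v ++ r = r ++ v := by
    obtain ⟨x, hx, hx0⟩ := hi.exists_ne []
    intro t ht v hv
    exact append_comm_trans hp₁ (hcomm₁ t ht v hv) (append_comm_trans hx0
      (hir x hx).symm (hcomm₁ i ⟨le_rfl, him⟩ x hx).symm)
  have hcomms : ∀ t ∈ Set.Icc m' j, ∀ v ∈ L t, v ++ s = s ++ v := by
    obtain ⟨y, hy, hy0⟩ := hj.exists_ne []
    intro t ht v hv
    exact append_comm_trans hp₂ (hcomm₂ t ht v hv) (append_comm_trans hy0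
      (hjs y hy).symm (hcomm₂ j ⟨hmj, le_rfl⟩ y hy).symm)
  have hadj : ConjugatePeriodic (L m) (w m.succ) (L m') :=
    ⟨h₁.nil_mem m ⟨him, le_rfl⟩, h₂.nil_mem m' ⟨le_rfl, hmj⟩, r, s, hr, hrs,
      hcommr m ⟨him, le_rfl⟩, hcomms m' ⟨le_rfl, hmj⟩⟩
  obtain ⟨hearliest, hlt⟩ := hN.adjacent m m' hm hadj.quasiPeriodic
  have hw : w m.succ = [] := hadj.eq_nil_of_lcpEps hearliest.1
  obtain rfl : r = s := by simpa [hw] using hrs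
  have hcover {t : Fin n} (hit : i ≤ t) (htj : t ≤ j) : t ∈ Set.Icc i m ∨ t ∈ Set.Icc m' j :=
    (le_or_gt t m).imp (⟨hit, ·⟩) (⟨hm.ge_of_gt ·, htj⟩)
  refine ⟨fun t ht => ?_, ⟨r, hr, fun t ht => ?_⟩, fun t ht => ?_,
    h₁.perm_le.trans (hlt.le.trans h₂.perm_le)⟩
  · exact (hcover ht.1 ht.2).elim (h₁.nil_mem t) (h₂.nil_mem t)
  · exact (hcover ht.1 ht.2).elim (hcommr t) (hcomms t)
  · rcases hcover ht.1 ht.2.le with h | h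
    · rcases h.2.lt_or_eq with htm | rfl
      · exact h₁.word_eq_nil t ⟨h.1, htm⟩
      · exact hw
    · exact h₂.word_eq_nil t ⟨h.1, ht.2⟩

theorem exists_covBy_of_le {α β : Type*} [LinearOrder α] [LocallyFiniteOrder α] [LinearOrder β]
    {π : α → β} {i j : α} (hij : i < j) (hπ : π j ≤ π i) :
    ∃ m m', i ≤ m ∧ m ⋖ m' ∧ m' ≤ j ∧ π m ≤ π i ∧ π j ≤ π m' := by
  have hi : i ∈ (Finset.Ico i j).filter (π · ≤ π i) := by simp [hij]
  obtain ⟨m, hm, hmax⟩ := Finset.exists_max_image _ id ⟨i, hi⟩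
  simp only [Finset.mem_filter, Finset.mem_Ico, id] at hm hmax
  obtain ⟨m', hmm', hm'j⟩ := exists_covBy_le_of_lt hm.1.2
  refine ⟨m, m', hm.1.1, hmm', hm'j, hm.2, ?_⟩
  rcases hm'j.lt_or_eq with hlt | rfl
  · by_contra! hcon
    exact hmm'.lt.not_ge (hmax m' ⟨⟨hm.1.1.trans hmm'.le, hlt⟩, hcon.le.trans hπ⟩)
  · exact le_rfl

theorem exists_conjugatePeriodic_of_lt_of_lt [∀ k, Nonempty (D k)]
    (he : EqUpToContext (ruleOutput w σ a) (ruleOutput w' σ' b)) {k l : Fin n}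
    (hk : QuasiPeriodic (Set.range (a k)) → EarliestLang (Set.range (a k)))
    (hl : QuasiPeriodic (Set.range (a l)) → EarliestLang (Set.range (a l)))
    (hk' : (Set.range (a k)).Nontrivial) (hl' : (Set.range (a l)).Nontrivial)
    (hkl : σ.symm k < σ.symm l) (hlk : σ'.symm l < σ'.symm k) :
    ∃ V, ConjugatePeriodic (Set.range (a k)) V (Set.range (a l)) ∧
      ∀ m ∈ Set.Ico (σ.symm k) (σ.symm l),
        (∀ i ∈ Set.Ioo (σ.symm k) (σ.symm l), [] ∈ Set.range (a (σ i))) →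
        (∀ i ∈ Set.Ico (σ.symm k) (σ.symm l), i ≠ m → w i.succ = []) → V = w m.succ := by
  obtain ⟨A, B, A', B', h⟩ := he
  have hx (k) : ∃ t : D k, [] ∈ Set.range (a k) → a k t = [] := by
    by_cases hnil : [] ∈ Set.range (a k)
    · exact hnil.imp fun t ht _ => ht
    · exact ⟨Classical.arbitrary _, fun h => absurd h hnil⟩
  choose x hx using hx
  obtain ⟨P, V, S, hP, hV⟩ := exists_ruleOutput_update_update_eq w a x hkl
  obtain ⟨P', V', S', hP', -⟩ := exists_ruleOutput_update_update_eq w' b x hlk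
  refine ⟨V, ConjugatePeriodic.of_forall_append_eq (A := A ++ P) (B := S ++ B)
    (b := fun t => A' ++ P' ++ b l t ++ V') (a := fun s => b k s ++ S' ++ B') (fun s t => ?_)
    hk' hl' hk hl, fun m hm hnil => hV m hm fun i hi => hx _ (hnil i hi)⟩
  have hne : k ≠ l := fun hkl' => hkl.ne (congrArg _ hkl')
  have := h (Function.update (Function.update x k s) l t)
  rw [hP, Function.update_comm hne, hP'] at this
  simpa using this

/-- The positions `i < j` of the rule with permutation `σ` read subtrees that the rule with
permutation `σ'` reads in the opposite order. -/
def IsInversion (σ σ' : Equiv.Perm (Fin n)) (i j : Fin n) : Prop :=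
  i < j ∧ σ'.symm (σ j) < σ'.symm (σ i)

theorem IsInversion.swap (h : IsInversion σ σ' i j) :
    IsInversion σ' σ (σ'.symm (σ j)) (σ'.symm (σ i)) := by
  simpa [IsInversion] using And.symm h

theorem NormalRule.quasiPeriodic_imp_earliestLang
    (hN : NormalRule (fun i => Set.range (a (σ i))) w σ) (k : Fin n)
    (hk : QuasiPeriodic (Set.range (a k))) : EarliestLang (Set.range (a k)) := by
  obtain ⟨i, rfl⟩ := σ.surjective k
  exact hN.earliest i hk

variable [∀ k, Nonempty (D k)]

theorem NormalRule.range_nontrivial_of_isInversion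
    (hN : NormalRule (fun i => Set.range (a (σ i))) w σ)
    (hN' : NormalRule (fun i => Set.range (b (σ' i))) w' σ')
    (he : EqUpToContext (ruleOutput w σ a) (ruleOutput w' σ' b)) (h : IsInversion σ σ' i j) :
    (Set.range (a (σ i))).Nontrivial ∧ (Set.range (a (σ j))).Nontrivial := by
  have hab (k) : Set.range (a k) = {[]} ↔ Set.range (b k) = {[]} :=
    ⟨(he.of_ruleOutput k).range_eq_singleton_nil (hN'.quasiPeriodic_imp_earliestLang k),
      (he.of_ruleOutput k).symm.range_eq_singleton_nil (hN.quasiPeriodic_imp_earliestLang k)⟩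
  have hij (hi : Set.range (a (σ i)) = {[]}) : Set.range (a (σ j)) = {[]} ∧ σ i ≤ σ j :=
    hN.erasing i j h.1.le hi
  have hji (hj : Set.range (a (σ j)) = {[]}) : Set.range (a (σ i)) = {[]} ∧ σ j ≤ σ i := by
    have := hN'.erasing _ _ h.2.le
    rw [Equiv.apply_symm_apply, Equiv.apply_symm_apply] at this
    exact (this ((hab _).1 hj)).imp_left (hab _).2
  have hne : σ i ≠ σ j := σ.injective.ne h.1.ne
  have hnontrivial (k) (hk : Set.range (a k) ≠ {[]}) : (Set.range (a k)).Nontrivial :=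
    Set.not_subsingleton_iff.1 fun hsub => hk <| eq_singleton_nil_of_subsingleton
      (hN.quasiPeriodic_imp_earliestLang k) (Set.range_nonempty _) hsub
  exact ⟨hnontrivial _ fun hi => hne ((hij hi).2.antisymm (hji (hij hi).1).2),
    hnontrivial _ fun hj => hne ((hij (hji hj).1).2.antisymm (hji hj).2)⟩

theorem NormalRule.exists_conjugatePeriodic_of_isInversion
    (hN : NormalRule (fun i => Set.range (a (σ i))) w σ)
    (hN' : NormalRule (fun i => Set.range (b (σ' i))) w' σ')
    (he : EqUpToContext (ruleOutput w σ a) (ruleOutput w' σ' b)) (h : IsInversion σ σ' i j) :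
    ∃ V, ConjugatePeriodic (Set.range (a (σ i))) V (Set.range (a (σ j))) ∧
      ∀ m ∈ Set.Ico i j, (∀ t ∈ Set.Ioo i j, [] ∈ Set.range (a (σ t))) →
        (∀ t ∈ Set.Ico i j, t ≠ m → w t.succ = []) → V = w m.succ := by
  obtain ⟨hi, hj⟩ := hN.range_nontrivial_of_isInversion hN' he h
  simpa only [Equiv.symm_apply_apply] using exists_conjugatePeriodic_of_lt_of_lt he
    (hN.earliest i) (hN.earliest j) hi hj (by simpa using h.1) h.2

theorem Fused.single (hnil : [] ∈ L i) {p : List Δ} (hp : p ≠ [])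
    (hcomm : ∀ v ∈ L i, v ++ p = p ++ v) : Fused L w σ i i where
  nil_mem t ht := by rwa [le_antisymm ht.2 ht.1]
  exists_comm := ⟨p, hp, fun t ht => by rwa [le_antisymm ht.2 ht.1]⟩
  word_eq_nil t ht := absurd ht (by simp)
  perm_le := le_rfl

/-- The adjacent positions `m`, `m'` cut the inversion into two parts that are single positions or
shorter inversions. Once both parts are fused, everything between `i` and `j` except the word after
`m` is empty, so that this word is the one that conjugates the periods. -/
theorem NormalRule.fused_of_isInversion (hN : NormalRule (fun i => Set.range (a (σ i))) w σ)
    (hN' : NormalRule (fun i => Set.range (b (σ' i))) w' σ')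
    (he : EqUpToContext (ruleOutput w σ a) (ruleOutput w' σ' b)) (h : IsInversion σ σ' i j) :
    Fused (fun i => Set.range (a (σ i))) w σ i j := by
  induction hd : (j : ℕ) - i using Nat.strong_induction_on generalizing i j with
  | _ d ih =>
  subst hd
  obtain ⟨hi, hj⟩ := hN.range_nontrivial_of_isInversion hN' he h
  obtain ⟨V, hV, hVw⟩ := hN.exists_conjugatePeriodic_of_isInversion hN' he h
  obtain ⟨m, m', him, hmm', hmj, hπm, hπm'⟩ :=
    exists_covBy_of_le (π := fun t => σ'.symm (σ t)) h.1 h.2.le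
  have hinj {s t : Fin n} (hst : s < t) (hle : σ'.symm (σ t) ≤ σ'.symm (σ s)) :
      IsInversion σ σ' s t :=
    ⟨hst, hle.lt_of_ne ((σ.trans σ'.symm).injective.ne hst.ne')⟩
  obtain ⟨r, s, hr, hrs, hir, hjs⟩ := hV.exists_conj
  have h₁ : Fused (fun i => Set.range (a (σ i))) w σ i m := by
    rcases him.lt_or_eq with hlt | rfl
    · exact ih _ (by have := hmm'.lt; omega) (hinj hlt hπm) rfl
    · exact .single hV.nil_mem_left hr hir
  have h₂ : Fused (fun i => Set.range (a (σ i))) w σ m' j := by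
    rcases hmj.lt_or_eq with hlt | rfl
    · exact ih _ (by have := hmm'.lt; omega) (hinj hlt hπm') rfl
    · exact .single hV.nil_mem_right (ne_nil_of_append_eq hr hrs) hjs
  obtain rfl := hVw m ⟨him, hmm'.lt.trans_le hmj⟩
    (fun t ht => (le_or_gt t m).elim (fun htm => h₁.nil_mem t ⟨ht.1.le, htm⟩)
      fun hmt => h₂.nil_mem t ⟨hmm'.ge_of_gt hmt, ht.2.le⟩)
    (fun t ht htm => htm.lt_or_gt.elim (fun htm => h₁.word_eq_nil t ⟨ht.1, htm⟩)
      fun hmt => h₂.word_eq_nil t ⟨hmm'.ge_of_gt hmt, ht.2⟩)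
  exact h₁.append hN him hmm' h₂ hmj hV hi hj

theorem NormalRule.perm_lt_of_isInversion (hN : NormalRule (fun i => Set.range (a (σ i))) w σ)
    (hN' : NormalRule (fun i => Set.range (b (σ' i))) w' σ')
    (he : EqUpToContext (ruleOutput w σ a) (ruleOutput w' σ' b)) (h : IsInversion σ σ' i j) :
    σ i < σ j :=
  (hN.fused_of_isInversion hN' he h).perm_le.lt_of_ne (σ.injective.ne h.1.ne)

theorem perm_eq_of_forall_not_isInversion (h : ∀ i j, ¬ IsInversion σ σ' i j) : σ = σ' := by
  have hmono : Monotone (σ.trans σ'.symm) := fun i j hij => by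
    rcases hij.lt_or_eq with hlt | rfl
    · exact le_of_not_gt fun hgt => h i j ⟨hlt, hgt⟩
    · exact le_rfl
  have hrefl := (Equiv.Perm.monotone_iff _).1 hmono
  ext1 i
  simpa using congrArg σ' (Equiv.congr_fun hrefl i)

theorem NormalRule.perm_eq (hN : NormalRule (fun i => Set.range (a (σ i))) w σ)
    (hN' : NormalRule (fun i => Set.range (b (σ' i))) w' σ')
    (he : EqUpToContext (ruleOutput w σ a) (ruleOutput w' σ' b)) : σ = σ' := by
  refine perm_eq_of_forall_not_isInversion fun i j h => ?_
  have hlt := hN.perm_lt_of_isInversion hN' he h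
  have hgt := hN'.perm_lt_of_isInversion hN he.symm h.swap
  rw [Equiv.apply_symm_apply, Equiv.apply_symm_apply] at hgt
  exact hlt.not_gt hgt

end RuleOutput

section Transducer

variable {F Δ Q Q' : Type} {ar : F → ℕ} {M : LTW F ar Δ Q} {M' : LTW F ar Δ Q'} {q : Q} {q' : Q'}
  {f : F} {r : LTWRule Δ Q (ar f)} {r' : LTWRule Δ Q' (ar f)}

/-- `dom(q)`, the set of trees on which `⟦M⟧_q` is defined. -/
def LTW.dom (M : LTW F ar Δ Q) (q : Q) : Set (RTree F ar) :=
  {t | (M.semState t q).isSome}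

/-- `⟦M⟧_q` as a total function, with the empty word as junk value outside `M.dom q`. -/
def LTW.output (M : LTW F ar Δ Q) (q : Q) (t : RTree F ar) : List Δ :=
  (M.semState t q).getD []

/-- The state in which a rule reads the `k`-th subtree, as opposed to `r.st`, which is indexed by
the position in the right-hand side. -/
def LTWRule.stateAt {n : ℕ} (r : LTWRule Δ Q n) (k : Fin n) : Q :=
  r.st (r.perm.symm k)

theorem LTWRule.stateAt_perm {n : ℕ} (r : LTWRule Δ Q n) (i : Fin n) :
    r.stateAt (r.perm i) = r.st i := by
  rw [LTWRule.stateAt, Equiv.symm_apply_apply]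

theorem LTW.semState_eq_some_output {t : RTree F ar} (ht : t ∈ M.dom q) :
    M.semState t q = some (M.output q t) := by
  obtain ⟨w, hw⟩ := Option.isSome_iff_exists.1 ht
  rw [LTW.output, hw, Option.getD_some]

theorem LTW.range_output {S : Set (RTree F ar)} (hS : S = M.dom q) :
    Set.range (fun t : S => M.output q t) = M.lang q := by
  subst hS
  ext w
  constructor
  · rintro ⟨t, rfl⟩
    exact ⟨t, semState_eq_some_output t.2⟩
  · rintro ⟨t, ht⟩
    have hdom : t ∈ M.dom q := Option.isSome_of_eq_some ht
    exact ⟨⟨t, hdom⟩, Option.some_injective _ ((semState_eq_some_output hdom).symm.trans ht)⟩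

theorem LTW.NonemptyDoms.dom_nonempty (hdom : M.NonemptyDoms) (q : Q) : (M.dom q).Nonempty :=
  (hdom q).imp fun _ ⟨_, ht⟩ => Option.isSome_of_eq_some ht

theorem LTWRule.forall_perm_mem_dom {ts : Fin (ar f) → RTree F ar} :
    (∀ i, ts (r.perm i) ∈ M.dom (r.st i)) ↔ ∀ k, ts k ∈ M.dom (r.stateAt k) := by
  rw [← r.perm.forall_congr_right (q := fun k => ts k ∈ M.dom (r.stateAt k))]
  simp only [stateAt_perm]

theorem LTW.node_mem_dom_iff_exists_rule {ts : Fin (ar f) → RTree F ar} :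
    .node f ts ∈ M.dom q ↔ ∃ r, M.rules q f = some r ∧ ∀ k, ts k ∈ M.dom (r.stateAt k) := by
  simp only [← LTWRule.forall_perm_mem_dom]
  change (M.semState _ q).isSome ↔ _
  rw [LTW.semState]
  cases M.rules q f <;> simp [LTW.dom]

theorem LTW.node_mem_dom_iff_mem_pi (hr : M.rules q f = some r) {ts : Fin (ar f) → RTree F ar} :
    .node f ts ∈ M.dom q ↔ ts ∈ Set.univ.pi fun k => M.dom (r.stateAt k) := by
  simp [node_mem_dom_iff_exists_rule, hr]

theorem LTW.output_node (hr : M.rules q f = some r) {ts : Fin (ar f) → RTree F ar}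
    (hts : ∀ k, ts k ∈ M.dom (r.stateAt k)) :
    M.output q (.node f ts) =
      ruleOutput r.word r.perm (fun k t => M.output (r.stateAt k) t) ts := by
  have hts' : ∀ i, (M.semState (ts (r.perm i)) (r.st i)).isSome :=
    LTWRule.forall_perm_mem_dom.2 hts
  rw [LTW.output, LTW.semState, hr]
  simp only [ruleOutput, LTWRule.stateAt_perm]
  rw [dif_pos hts', Option.getD_some]
  exact congrArg _ (funext fun _ => Option.get_eq_getD _)

theorem LTW.PartialNormalForm.normalRule (h : M.PartialNormalForm) (hr : M.rules q f = some r) :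
    NormalRule (fun i => M.lang (r.st i)) r.word r.perm where
  earliest i := h.1 (r.st i)
  erasing i j hij hi := (h.2.1 q f r hr i j hi hij).imp_right And.left
  adjacent i j hij hqp := by
    obtain ⟨j, hj⟩ := j
    obtain rfl := Order.covBy_iff_add_one_eq.1 (Fin.covBy_iff.1 hij)
    exact h.2.2 q f r hr i hj hqp

theorem LTW.PartialNormalForm.normalRule_range (h : M.PartialNormalForm)
    (hr : M.rules q f = some r) {S : Fin (ar f) → Set (RTree F ar)}
    (hS : ∀ k, S k = M.dom (r.stateAt k)) :
    NormalRule (fun i => Set.range fun t : S (r.perm i) => M.output (r.stateAt (r.perm i)) t)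
      r.word r.perm := by
  have hrange (i) : Set.range (fun t : S (r.perm i) => M.output (r.stateAt (r.perm i)) t) =
      M.lang (r.st i) := by
    rw [range_output (hS _), r.stateAt_perm]
  simpa only [hrange] using h.normalRule hr

/-- The states `q` and `q'` of two transducers compute partial functions with the same domain that
agree up to a context. -/
structure ConjugateStates (M : LTW F ar Δ Q) (M' : LTW F ar Δ Q') (q : Q) (q' : Q') : Prop where
  dom_eq : M.dom q = M'.dom q'
  output : EqUpToContext (fun t : M.dom q => M.output q t) fun t : M.dom q => M'.output q' t

namespace ConjugateStates

theorem symm (h : ConjugateStates M M' q q') : ConjugateStates M' M q' q :=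
  ⟨h.dom_eq.symm, h.dom_eq ▸ h.output.symm⟩

theorem of_sem_eq (h : M.sem = M'.sem) : ConjugateStates M M' M.init M'.init := by
  have hdom : M.dom M.init = M'.dom M'.init := by
    ext t
    have ht := congrArg Option.isSome (congrFun h t)
    rw [LTW.sem, LTW.sem, Option.isSome_map, Option.isSome_map] at ht
    exact Bool.eq_iff_iff.1 ht
  refine ⟨hdom, M.pre, M.post, M'.pre, M'.post, fun t => ?_⟩
  have ht := congrFun h t
  rw [LTW.sem, LTW.sem, LTW.semState_eq_some_output t.2,
    LTW.semState_eq_some_output (hdom ▸ t.2)] at ht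
  exact Option.some.inj ht

theorem exists_rule (h : ConjugateStates M M' q q') (hdom : M.NonemptyDoms)
    (hr : M.rules q f = some r) : ∃ r', M'.rules q' f = some r' := by
  choose ts hts using fun k => hdom.dom_nonempty (r.stateAt k)
  have hnode : .node f ts ∈ M'.dom q' :=
    h.dom_eq ▸ LTW.node_mem_dom_iff_exists_rule.2 ⟨r, hr, hts⟩
  obtain ⟨r', hr', -⟩ := LTW.node_mem_dom_iff_exists_rule.1 hnode
  exact ⟨r', hr'⟩

theorem rules_eq_none (h : ConjugateStates M M' q q') (hdom' : M'.NonemptyDoms)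
    (hr : M.rules q f = none) : M'.rules q' f = none := by
  refine Option.eq_none_iff_forall_ne_some.2 fun r' hr' => ?_
  obtain ⟨r, hr₂⟩ := h.symm.exists_rule hdom' hr'
  exact Option.some_ne_none r (hr₂.symm.trans hr)

theorem dom_stateAt_eq (h : ConjugateStates M M' q q') (hdom : M.NonemptyDoms)
    (hr : M.rules q f = some r) (hr' : M'.rules q' f = some r')
    (k : Fin (ar f)) : M.dom (r.stateAt k) = M'.dom (r'.stateAt k) := by
  have hpi : (Set.univ.pi fun k => M.dom (r.stateAt k)) =
      Set.univ.pi fun k => M'.dom (r'.stateAt k) := by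
    ext ts
    rw [← LTW.node_mem_dom_iff_mem_pi hr, ← LTW.node_mem_dom_iff_mem_pi hr', h.dom_eq]
  have hne : (Set.univ.pi fun k => M.dom (r.stateAt k)).Nonempty :=
    Set.univ_pi_nonempty_iff.2 fun k => hdom.dom_nonempty _
  calc M.dom (r.stateAt k)
    _ = Function.eval k '' Set.univ.pi fun k => M.dom (r.stateAt k) :=
      (Set.eval_image_univ_pi hne).symm
    _ = Function.eval k '' Set.univ.pi fun k => M'.dom (r'.stateAt k) := by rw [hpi]
    _ = M'.dom (r'.stateAt k) := Set.eval_image_univ_pi (hpi ▸ hne)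

theorem eqUpToContext_ruleOutput (h : ConjugateStates M M' q q') (hdom : M.NonemptyDoms)
    (hr : M.rules q f = some r) (hr' : M'.rules q' f = some r') :
    EqUpToContext
      (ruleOutput r.word r.perm fun k (t : M.dom (r.stateAt k)) => M.output (r.stateAt k) t)
      (ruleOutput r'.word r'.perm fun k (t : M.dom (r.stateAt k)) =>
        M'.output (r'.stateAt k) t) := by
  obtain ⟨A, B, A', B', hAB⟩ := h.output
  refine ⟨A, B, A', B', fun x => ?_⟩
  have hx (k) : (x k : RTree F ar) ∈ M.dom (r.stateAt k) := (x k).2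
  have hx' (k) : (x k : RTree F ar) ∈ M'.dom (r'.stateAt k) :=
    h.dom_stateAt_eq hdom hr hr' k ▸ hx k
  have hnode := hAB ⟨.node f fun k => x k, (LTW.node_mem_dom_iff_mem_pi hr).2 fun k _ => hx k⟩
  beta_reduce at hnode
  rwa [LTW.output_node hr hx, LTW.output_node hr' hx'] at hnode

theorem stateAt (h : ConjugateStates M M' q q') (hdom : M.NonemptyDoms)
    (hr : M.rules q f = some r) (hr' : M'.rules q' f = some r') (k : Fin (ar f)) :
    ConjugateStates M M' (r.stateAt k) (r'.stateAt k) :=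
  have (k : Fin (ar f)) : Nonempty (M.dom (r.stateAt k)) := (hdom.dom_nonempty _).to_subtype
  ⟨h.dom_stateAt_eq hdom hr hr' k, (h.eqUpToContext_ruleOutput hdom hr hr').of_ruleOutput k⟩

theorem perm_eq (h : ConjugateStates M M' q q') (hdom : M.NonemptyDoms)
    (hM : M.PartialNormalForm) (hM' : M'.PartialNormalForm)
    (hr : M.rules q f = some r) (hr' : M'.rules q' f = some r') : r.perm = r'.perm :=
  have (k : Fin (ar f)) : Nonempty (M.dom (r.stateAt k)) := (hdom.dom_nonempty _).to_subtype
  (hM.normalRule_range hr fun _ => rfl).perm_eq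
    (hM'.normalRule_range hr' (h.dom_stateAt_eq hdom hr hr'))
    (h.eqUpToContext_ruleOutput hdom hr hr')

end ConjugateStates

theorem CoReach.conjugateStates (h : CoReach M M' q q') (hdom : M.NonemptyDoms)
    (heq : M.sem = M'.sem) : ConjugateStates M M' q q' := by
  induction h with
  | base => exact .of_sem_eq heq
  | @step q₁ q₂ f r₁ r₂ i j _ hr₁ hr₂ hij ih =>
    have hk := ih.stateAt hdom hr₁ hr₂ (r₁.perm i)
    rwa [r₁.stateAt_perm, hij, r₂.stateAt_perm] at hk

end Transducer

theorem sameOrdered_of_equivalent_partialNormalForm_general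
    {F Δ Q Q' : Type} {ar : F → ℕ} (M : LTW F ar Δ Q) (M' : LTW F ar Δ Q')
    (hdom : M.NonemptyDoms) (hdom' : M'.NonemptyDoms) (heq : M.sem = M'.sem)
    (h : M.PartialNormalForm) (h' : M'.PartialNormalForm) : SameOrdered M M' := by
  intro q q' hq f
  have hqq' := hq.conjugateStates hdom heq
  cases hr : M.rules q f with
  | none => exact .inl ⟨rfl, hqq'.rules_eq_none hdom' hr⟩
  | some r =>
    obtain ⟨r', hr'⟩ := hqq'.exists_rule hdom hr
    exact .inr ⟨r, r', rfl, hr', hqq'.perm_eq hdom h h' hr hr'⟩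

/-- equivalent LTWs in partial normal form are same-ordered. -/
theorem sameOrdered_of_equivalent_partialNormalForm
    {F Δ Q Q' : Type} {ar : F → ℕ} [Finite Q] [Finite Q']
    (M : LTW F ar Δ Q) (M' : LTW F ar Δ Q')
    (hdom : M.NonemptyDoms) (hdom' : M'.NonemptyDoms)
    (heq : M.sem = M'.sem)
    (h : M.PartialNormalForm) (h' : M'.PartialNormalForm) :
    SameOrdered M M' :=
  sameOrdered_of_equivalent_partialNormalForm_general M M' hdom hdom' heq h h'

end LTWpaper
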